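/- There is no terminal simplicial reflexive d-polytope P with exactly 3d-1 vertices possessing a special facet F such that exactly d vertices of P satisfy ⟨u_F,·⟩ = 0, exactly d-2 vertices satisfy ⟨u_F,·⟩ = -1, and exactly one vertex satisfies ⟨u_F,·⟩ = -2. -/

import Mathlib

/-!
The number of vertices and the heights `1, 0, -1, -2` make the heights over `F` sum to `0`, so a
special `F` forces the vertices to sum to `0`, and every facet is special. Hence heights over any
facet are at least `-2`, and a facet seeing a vertex at height `-2` has exactly `d` vertices at
height `0` and no second vertex at height `-2` or below (`TSR.levels`).

Let `e i` be the vertices of `F`. A vertex at height `0` over a facet lies on a neighbouring facet;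
when there are `d` of them, terminality makes them `e (φ i) - e i` for a map `φ` without fixed
points, and the neighbouring facets are given by `u_F - u_F^{e i}` (`TSR.zero_structure`). Applying
the bound `-2` to the neighbours, the vertex at height `-2` is `z = -e a - e b` with `a ≠ b`
(`TSR.bottom_vertex`). For `i ≠ a, b` it also has height `-2` over the neighbouring facet
`N(F, e i)`, which therefore has the same structure as `F`. Comparing the two structures, and using
terminality again, gives: `φ k = i` implies `φ i = k` for `i ≠ a, b` (`TSR.Config.phi_phi`), and all
vertices at height `-1` have the form `-e i` (`TSR.Config.of_neg_one`).

Since `φ a ≠ b` and `φ b ≠ a` by terminality, `φ` swaps `a` with `c = φ a` and `b` with `c' = φ b`.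
Now all vertices are known well enough to exhibit an explicit facet with too many vertices. If `-e a`
is a vertex, there is a facet containing `-e a`, `e c'` and `e b`, and both `(-e a) - e b` and
`e c' - e b` would be its neighbouring vertex across `e b`. Otherwise there is a facet containing
`e b`, `z`, `e c - e a` and `-e c`, which is not a simplex as `e b + z = (e c - e a) + (-e c)`
(`TSR.Config.contradiction`).
-/
open Finset

/-- A point of `ℝ^d` is a lattice point if all of its coordinates are integers. -/
def IsLatticePt {d : ℕ} (x : Fin d → ℝ) : Prop := ∀ i, ∃ z : ℤ, x i = (z : ℝ)

/-- The pairing between `M_ℝ` and `N_ℝ`, both identified with `ℝ^d`. -/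
noncomputable def pairing {d : ℕ} (u x : Fin d → ℝ) : ℝ := ∑ i, u i * x i

/-- The `i`-th standard basis vector of `ℝ^d`. -/
noncomputable def stdVec {d : ℕ} (i : Fin d) : Fin d → ℝ := Pi.single i 1

/-- A polytope in `ℝ^d`, given by its finite vertex set (each listed point is
required to be an extreme point of the convex hull, i.e. a genuine vertex). -/
structure Polytope (d : ℕ) where
  verts : Finset (Fin d → ℝ)
  vertsExtreme : ∀ v ∈ verts,
    v ∈ Set.extremePoints ℝ (convexHull ℝ (verts : Set (Fin d → ℝ)))

namespace Polytope

variable {d : ℕ}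

/-- The polytope as a subset of `ℝ^d`. -/
def carrier (P : Polytope d) : Set (Fin d → ℝ) :=
  convexHull ℝ (P.verts : Set (Fin d → ℝ))

/-- A proper face of `P`, cut out by a supporting hyperplane. -/
def IsFace (P : Polytope d) (F : Set (Fin d → ℝ)) : Prop :=
  ∃ u : Fin d → ℝ, u ≠ 0 ∧ ∃ c : ℝ,
    (∀ x ∈ P.carrier, pairing u x ≤ c) ∧ F = {x ∈ P.carrier | pairing u x = c}

/-- A facet of `P`: a nonempty proper face of dimension `d - 1`. -/
def IsFacet (P : Polytope d) (F : Set (Fin d → ℝ)) : Prop :=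
  P.IsFace F ∧ F.Nonempty ∧ Module.finrank ℝ (vectorSpan ℝ F) = d - 1

/-- The set of vertices of `P` lying on `F`. -/
def vertsOn (P : Polytope d) (F : Set (Fin d → ℝ)) : Set (Fin d → ℝ) :=
  {v | v ∈ P.verts ∧ v ∈ F}

/-- `P` is simplicial if every facet has exactly `d` vertices. -/
def IsSimplicial (P : Polytope d) : Prop :=
  ∀ F, P.IsFacet F → (P.vertsOn F).ncard = d

/-- `P` is a lattice polytope. -/
def IsLattice (P : Polytope d) : Prop := ∀ v ∈ P.verts, IsLatticePt v

/-- `u` is the supporting functional `u_F` of the facet `F`, i.e. `⟨u, ·⟩ = 1` on `F`. -/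
def IsUF (P : Polytope d) (F : Set (Fin d → ℝ)) (u : Fin d → ℝ) : Prop :=
  ∀ x ∈ F, pairing u x = 1

/-- `u` is the dual basis element `u_F^v`: it takes value `1` at the vertex `v` of `F`
and `0` at all other vertices of `F`. -/
def IsDualBasisElt (P : Polytope d) (F : Set (Fin d → ℝ)) (v : Fin d → ℝ)
    (u : Fin d → ℝ) : Prop :=
  pairing u v = 1 ∧ ∀ w ∈ P.vertsOn F, w ≠ v → pairing u w = 0

/-- `P` is reflexive: it is a lattice polytope with `0` in its interior, and every
facet lies on a hyperplane `⟨u, ·⟩ = 1` with `u` integral (equivalently, the dual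
polytope is a lattice polytope). -/
def IsReflexive (P : Polytope d) : Prop :=
  P.IsLattice ∧ 0 ∈ interior P.carrier ∧
    ∀ F, P.IsFacet F → ∃ u : Fin d → ℤ, P.IsUF F (fun i => (u i : ℝ))

/-- `P` is terminal: the only lattice points of `P` are its vertices and the origin. -/
def IsTerminal (P : Polytope d) : Prop :=
  ∀ x ∈ P.carrier, IsLatticePt x → x = 0 ∨ x ∈ P.verts

/-- `F'` is the neighboring facet `N(F, v)`: the facet different from `F` containing
all vertices of `F` except `v`. -/
def IsNeighborFacet (P : Polytope d) (F : Set (Fin d → ℝ)) (v : Fin d → ℝ)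
    (F' : Set (Fin d → ℝ)) : Prop :=
  P.IsFacet F' ∧ F' ≠ F ∧ ∀ w ∈ P.vertsOn F, w ≠ v → w ∈ F'

/-- `y` is the neighboring vertex `n(F, v)`: the unique vertex of `N(F, v)` not on `F`. -/
def IsNeighborVertex (P : Polytope d) (F : Set (Fin d → ℝ)) (v : Fin d → ℝ)
    (y : Fin d → ℝ) : Prop :=
  ∃ F', P.IsNeighborFacet F v F' ∧ y ∈ P.vertsOn F' ∧ y ∉ F

/-- `F` is a special facet of `P`: the sum of all vertices of `P` is a nonnegative
linear combination of the vertices of `F`, i.e. `⟨u_F^w, ν_P⟩ ≥ 0` for every vertex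
`w` of `F`. -/
def IsSpecialFacet (P : Polytope d) (F : Set (Fin d → ℝ)) : Prop :=
  P.IsFacet F ∧ ∀ w ∈ P.vertsOn F, ∀ uFw : Fin d → ℝ,
    P.IsDualBasisElt F w uFw → 0 ≤ pairing uFw (∑ v ∈ P.verts, v)

end Polytope

/-- `S` is a `ℤ`-basis of the lattice `ℤ^d ⊆ ℝ^d`. -/
def IsLatticeBasis {d : ℕ} (S : Set (Fin d → ℝ)) : Prop :=
  ∃ v : Fin d → (Fin d → ℝ), Set.range v = S ∧
    ∀ x : Fin d → ℝ, (IsLatticePt x ↔ ∃ a : Fin d → ℤ, x = ∑ i, (a i : ℝ) • v i)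


/-! ### Facet functionals of a finite vertex set -/

/-- `f` is the functional `u_G` of a facet `G` of the convex hull of `V` (with `0` inside):
it is at most `1` on `V`, and the points of `V` at height `1` span the whole space. -/
def FacetFun {d : ℕ} (V : Finset (Fin d → ℝ)) (f : (Fin d → ℝ) →ₗ[ℝ] ℝ) : Prop :=
  (∀ v ∈ V, f v ≤ 1) ∧ Submodule.span ℝ {v | v ∈ V ∧ f v = 1} = ⊤

/-- The properties of the vertex set `V` of a terminal simplicial reflexive polytope used
in the combinatorial part of the argument, phrased through linear functionals. -/
structure TSR {d : ℕ} (V : Finset (Fin d → ℝ)) : Prop where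
  lat : ∀ v ∈ V, IsLatticePt v
  neg : ∀ f : (Fin d → ℝ) →ₗ[ℝ] ℝ, f ≠ 0 → ∃ v ∈ V, f v < 0
  int : ∀ f, FacetFun V f → ∀ x, IsLatticePt x → ∃ z : ℤ, f x = z
  card : ∀ f, FacetFun V f → {v | v ∈ V ∧ f v = 1}.ncard = d
  ext : ∀ p ∈ V, ∀ x ∈ convexHull ℝ (V : Set (Fin d → ℝ)),
    ∀ y ∈ convexHull ℝ (V : Set (Fin d → ℝ)), p ∈ openSegment ℝ x y → x = p
  term : ∀ x ∈ convexHull ℝ (V : Set (Fin d → ℝ)), IsLatticePt x → x = 0 ∨ x ∈ V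
  zero_notMem : (0 : Fin d → ℝ) ∉ V
  zero_mem : (0 : Fin d → ℝ) ∈ convexHull ℝ (V : Set (Fin d → ℝ))

section Lattice

variable {d : ℕ}

lemma IsLatticePt.add {x y : Fin d → ℝ} (hx : IsLatticePt x) (hy : IsLatticePt y) :
    IsLatticePt (x + y) := fun i => by
  obtain ⟨m, hm⟩ := hx i
  obtain ⟨n, hn⟩ := hy i
  exact ⟨m + n, by simp [hm, hn]⟩

lemma IsLatticePt.neg {x : Fin d → ℝ} (hx : IsLatticePt x) : IsLatticePt (-x) := fun i => by
  obtain ⟨m, hm⟩ := hx i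
  exact ⟨-m, by simp [hm]⟩

end Lattice

namespace TSR

variable {d : ℕ} {V : Finset (Fin d → ℝ)} {f : (Fin d → ℝ) →ₗ[ℝ] ℝ}

lemma nonempty_fin (C : TSR V) : Nonempty (Fin d) := by
  by_contra h
  rw [not_nonempty_iff] at h
  obtain ⟨v, hv⟩ := convexHull_nonempty_iff.1 ⟨0, C.zero_mem⟩
  exact C.zero_notMem (Subsingleton.elim v 0 ▸ hv)

/-- The vertices of a facet form a basis of the ambient space. -/
lemma exists_basis (C : TSR V) (hf : FacetFun V f) :
    ∃ b : Module.Basis (Fin d) ℝ (Fin d → ℝ), (∀ i, b i ∈ V ∧ f (b i) = 1) ∧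
      (∀ v ∈ V, f v = 1 → ∃ i, v = b i) := by
  classical
  set S : Finset (Fin d → ℝ) := V.filter (fun v => f v = 1) with hS
  have hSc : (S : Set (Fin d → ℝ)) = {v | v ∈ V ∧ f v = 1} := by ext v; simp [hS]
  have hcard : S.card = d := by
    have := C.card f hf
    rwa [← hSc, Set.ncard_coe_finset] at this
  let e : Fin d ≃ S := (S.equivFinOfCardEq hcard).symm
  let b := basisOfTopLeSpanOfCardEqFinrank (fun i => (e i : Fin d → ℝ)) (by
      rw [← hf.2, ← hSc]
      apply Submodule.span_mono
      intro v hv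
      exact ⟨e.symm ⟨v, hv⟩, by simp⟩) (by simp)
  have hb : ∀ i, b i = e i := fun i => by simp [b]
  refine ⟨b, fun i => ?_, fun v hv h1 => ⟨e.symm ⟨v, by simp [hS, hv, h1]⟩, by simp [hb]⟩⟩
  rw [hb]
  exact Finset.mem_filter.1 (e i).2

/-- Four vertices of a facet satisfy no relation `p + q = r + s` other than a trivial one. -/
lemma no_relation (C : TSR V) (hf : FacetFun V f) {p q r s : Fin d → ℝ}
    (hp : p ∈ V ∧ f p = 1) (hq : q ∈ V ∧ f q = 1) (hr : r ∈ V ∧ f r = 1)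
    (hs : s ∈ V ∧ f s = 1) (h : p + q = r + s) : p = r ∨ p = s := by
  obtain ⟨b, -, hb2⟩ := C.exists_basis hf
  obtain ⟨i, rfl⟩ := hb2 p hp.1 hp.2
  obtain ⟨j, rfl⟩ := hb2 q hq.1 hq.2
  obtain ⟨k, rfl⟩ := hb2 r hr.1 hr.2
  obtain ⟨l, rfl⟩ := hb2 s hs.1 hs.2
  by_contra! hne
  have hki : k ≠ i := fun h => hne.1 (by rw [h])
  have hli : l ≠ i := fun h => hne.2 (by rw [h])
  have := congrArg (b.coord i) h
  simp only [map_add, Module.Basis.coord_apply, Module.Basis.repr_self, Finsupp.single_apply,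
    if_neg hki, if_neg hli, if_true] at this
  split_ifs at this <;> norm_num at this

end TSR

section Basis

variable {d : ℕ} {f : (Fin d → ℝ) →ₗ[ℝ] ℝ} (b : Module.Basis (Fin d) ℝ (Fin d → ℝ))

lemma sum_coord_of_one (hb : ∀ i, f (b i) = 1) (x : Fin d → ℝ) : f x = ∑ i, b.coord i x := by
  conv_lhs => rw [← b.sum_repr x]
  rw [map_sum]
  exact Finset.sum_congr rfl fun i _ => by rw [map_smul, hb, smul_eq_mul, mul_one]; rfl

lemma coord_basis (i j : Fin d) : b.coord i (b j) = if j = i then 1 else 0 := by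
  simp [Finsupp.single_apply]

lemma span_top_of_swap {W : Submodule ℝ (Fin d → ℝ)} {i : Fin d} {y : Fin d → ℝ}
    (hW : ∀ j, j ≠ i → b j ∈ W) (hy : y ∈ W) (hi : b.coord i y ≠ 0) : W = ⊤ := by
  have hbi : b i ∈ W := by
    have h1 : b.coord i y • b i = y - ∑ j ∈ univ.erase i, b.coord j y • b j := by
      rw [eq_sub_iff_add_eq, Finset.add_sum_erase _ (fun j => b.coord j y • b j) (mem_univ i)]
      exact b.sum_repr y
    have h2 : b.coord i y • b i ∈ W := by
      rw [h1]
      exact W.sub_mem hy (W.sum_mem fun j hj => W.smul_mem _ (hW j (Finset.ne_of_mem_erase hj)))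
    exact (W.smul_mem_iff hi).1 h2
  rw [eq_top_iff, ← b.span_eq, Submodule.span_le]
  rintro _ ⟨j, rfl⟩
  by_cases h : j = i
  · exact h ▸ hbi
  · exact hW j h

end Basis

namespace TSR

variable {d : ℕ} {V : Finset (Fin d → ℝ)} {f : (Fin d → ℝ) →ₗ[ℝ] ℝ}

/-- The facet `N(F, b i)`: tilting `f` away from `b i` until a new vertex is reached. -/
lemma exists_neighbor (C : TSR V) (hf : FacetFun V f) (b : Module.Basis (Fin d) ℝ (Fin d → ℝ))
    (hb1 : ∀ i, b i ∈ V ∧ f (b i) = 1) (hb2 : ∀ v ∈ V, f v = 1 → ∃ i, v = b i) (i : Fin d) :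
    ∃ k : ℝ, 0 < k ∧ FacetFun V (f - k • b.coord i) := by
  classical
  have hne : b.coord i ≠ 0 := fun h => by
    have := coord_basis b i i
    simp [h] at this
  obtain ⟨v₀, hv₀, hneg⟩ := C.neg _ hne
  obtain ⟨y, hyT, hmin⟩ := Finset.exists_min_image (V.filter fun v => b.coord i v < 0)
    (fun v => (1 - f v) / (-b.coord i v)) ⟨v₀, by simpa using ⟨hv₀, hneg⟩⟩
  rw [Finset.mem_filter] at hyT
  obtain ⟨hyV, hy⟩ := hyT
  have hy1 : f y < 1 := by
    refine lt_of_le_of_ne (hf.1 y hyV) fun h => ?_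
    obtain ⟨j, rfl⟩ := hb2 y hyV h
    rw [coord_basis] at hy
    split_ifs at hy <;> linarith
  have hk : 0 < (1 - f y) / (-b.coord i y) := div_pos (by linarith) (by linarith)
  have hky : (1 - f y) / (-b.coord i y) * b.coord i y = -(1 - f y) := by
    rw [div_neg, neg_mul, div_mul_cancel₀ _ hy.ne]
  refine ⟨(1 - f y) / (-b.coord i y), hk, fun v hv => ?_, ?_⟩
  · simp only [LinearMap.sub_apply, LinearMap.smul_apply, smul_eq_mul]
    by_cases hvi : b.coord i v < 0
    · have := hmin v (by simpa using ⟨hv, hvi⟩)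
      rw [le_div_iff₀ (by linarith)] at this
      linarith
    · have := mul_nonneg hk.le (not_lt.1 hvi)
      have := hf.1 v hv
      linarith
  · refine span_top_of_swap b (i := i) (y := y) (fun j hj => Submodule.subset_span ⟨(hb1 j).1, ?_⟩)
      (Submodule.subset_span ⟨hyV, ?_⟩) hy.ne
    · simp [(hb1 j).2, hj]
    · simp only [LinearMap.sub_apply, LinearMap.smul_apply, smul_eq_mul]
      linarith

/-- A facet sharing with `F` all vertices but `b i` has only one further vertex. -/
lemma neighbor_unique (C : TSR V) (b : Module.Basis (Fin d) ℝ (Fin d → ℝ))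
    (hb1 : ∀ i, b i ∈ V ∧ f (b i) = 1) {i : Fin d} {k : ℝ}
    (hg : FacetFun V (f - k • b.coord i)) {v w : Fin d → ℝ} (hv : v ∈ V) (hw : w ∈ V)
    (hv1 : f v - k * b.coord i v = 1) (hw1 : f w - k * b.coord i w = 1)
    (hvi : b.coord i v ≠ 0) (hwi : b.coord i w ≠ 0) : v = w := by
  classical
  by_contra hne
  have hnot : ∀ u, b.coord i u ≠ 0 → u ∉ (univ.erase i).image b := by
    intro u hu hmem
    obtain ⟨j, hj, rfl⟩ := Finset.mem_image.1 hmem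
    rw [coord_basis, if_neg (Finset.ne_of_mem_erase hj)] at hu
    exact hu rfl
  have hsub : ((insert v (insert w ((univ.erase i).image b)) : Finset _) : Set (Fin d → ℝ)) ⊆
      {v | v ∈ V ∧ (f - k • b.coord i) v = 1} := by
    intro u hu
    simp only [Finset.coe_insert, Set.mem_insert_iff, Finset.mem_coe, Finset.mem_image] at hu
    rcases hu with rfl | rfl | ⟨j, hj, rfl⟩
    · exact ⟨hv, by simpa using hv1⟩
    · exact ⟨hw, by simpa using hw1⟩
    · exact ⟨(hb1 j).1, by simp [(hb1 j).2, Finset.ne_of_mem_erase hj]⟩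
  have hle := Set.ncard_le_ncard hsub (V.finite_toSet.subset fun u hu => hu.1)
  rw [C.card _ hg, Set.ncard_coe_finset, Finset.card_insert_of_notMem (by
    rw [Finset.mem_insert, not_or]; exact ⟨hne, hnot v hvi⟩),
    Finset.card_insert_of_notMem (hnot w hwi), Finset.card_image_of_injective _ b.injective,
    Finset.card_erase_of_mem (mem_univ i), Finset.card_univ, Fintype.card_fin] at hle
  omega

/-- The tilting factor `k` is at least `1`, as `1 - k` is the height of `b i` over `N(F, b i)`.
A vertex at height `0` with negative `i`-th coordinate lies on `N(F, b i)`: its height there is a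
positive integer, hence `1`. -/
lemma exists_tilt (C : TSR V) (hf : FacetFun V f) (b : Module.Basis (Fin d) ℝ (Fin d → ℝ))
    (hb1 : ∀ i, b i ∈ V ∧ f (b i) = 1) (hb2 : ∀ v ∈ V, f v = 1 → ∃ i, v = b i) (i : Fin d) :
    ∃ k : ℝ, 1 ≤ k ∧ FacetFun V (f - k • b.coord i) ∧
      ∀ v ∈ V, f v = 0 → b.coord i v < 0 → k * b.coord i v = -1 := by
  obtain ⟨k, hk, hg⟩ := C.exists_neighbor hf b hb1 hb2 i
  refine ⟨k, ?_, hg, fun v hv h0 hneg => ?_⟩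
  · obtain ⟨m, hm⟩ := C.int _ hg (b i) (C.lat _ (hb1 i).1)
    simp only [LinearMap.sub_apply, LinearMap.smul_apply, smul_eq_mul, (hb1 i).2, coord_basis,
      if_true, mul_one] at hm
    have h1 : (0 : ℝ) < ((1 - m : ℤ) : ℝ) := by push_cast; linarith
    have h2 : (1 : ℤ) ≤ 1 - m := by exact_mod_cast h1
    have h3 : (1 : ℝ) ≤ ((1 - m : ℤ) : ℝ) := by exact_mod_cast h2
    push_cast at h3
    linarith
  · obtain ⟨m, hm⟩ := C.int _ hg v (C.lat _ hv)
    have hle := hg.1 v hv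
    rw [hm] at hle
    simp only [LinearMap.sub_apply, LinearMap.smul_apply, smul_eq_mul, h0] at hm
    have h1 : (0 : ℝ) < (m : ℝ) := by nlinarith
    have h2 : (0 : ℤ) < m := by exact_mod_cast h1
    have h3 : m ≤ 1 := by exact_mod_cast hle
    have : m = 1 := by omega
    rw [this] at hm
    push_cast at hm
    linarith

/-- At most one vertex at height `0` has negative `i`-th coordinate, namely `n(F, b i)`. -/
lemma zero_unique (C : TSR V) (hf : FacetFun V f) (b : Module.Basis (Fin d) ℝ (Fin d → ℝ))
    (hb1 : ∀ i, b i ∈ V ∧ f (b i) = 1) (hb2 : ∀ v ∈ V, f v = 1 → ∃ i, v = b i) {i : Fin d}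
    {v w : Fin d → ℝ} (hv : v ∈ V) (hw : w ∈ V) (hv0 : f v = 0) (hw0 : f w = 0)
    (hvi : b.coord i v < 0) (hwi : b.coord i w < 0) : v = w := by
  obtain ⟨k, -, hg, hk⟩ := C.exists_tilt hf b hb1 hb2 i
  refine C.neighbor_unique b hb1 hg hv hw ?_ ?_ hvi.ne hwi.ne
  · rw [hv0, hk v hv hv0 hvi]; norm_num
  · rw [hw0, hk w hw hw0 hwi]; norm_num

lemma exists_neg_coord (C : TSR V) (b : Module.Basis (Fin d) ℝ (Fin d → ℝ))
    (hb1 : ∀ i, b i ∈ V ∧ f (b i) = 1) {v : Fin d → ℝ} (hv : v ∈ V) (hv0 : f v = 0) :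
    ∃ i, b.coord i v < 0 := by
  by_contra! h
  rw [sum_coord_of_one b (fun i => (hb1 i).2) v,
    Finset.sum_eq_zero_iff_of_nonneg (fun i _ => h i)] at hv0
  have : v = 0 := b.ext_elem fun i => by simpa using hv0 i (mem_univ i)
  exact C.zero_notMem (this ▸ hv)

/-- At most `d` vertices lie at height `0` over a facet. -/
lemma card_zero_le (C : TSR V) (hf : FacetFun V f) : {v | v ∈ V ∧ f v = 0}.ncard ≤ d := by
  obtain ⟨b, hb1, hb2⟩ := C.exists_basis hf
  have hfin : {v | v ∈ V ∧ f v = 0}.Finite := V.finite_toSet.subset fun u hu => hu.1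
  have := C.nonempty_fin
  choose! i hi using fun v (hv : v ∈ {v | v ∈ V ∧ f v = 0}) =>
    C.exists_neg_coord b hb1 hv.1 hv.2
  have := Set.ncard_le_ncard_of_injOn i (t := Set.univ) (fun _ _ => Set.mem_univ _)
    (fun v hv w hw h => C.zero_unique hf b hb1 hb2 hv.1 hw.1 hv.2 hw.2 (hi v hv)
      (by rw [h]; exact hi w hw)) Set.finite_univ
  simpa [Set.ncard_univ] using this

/-- If `d` vertices lie at height `0`, each vertex `b i` of the facet is replaced, in the
neighbouring facet `N(F, b i)`, by a vertex of the form `b j - b i`, and there are no other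
vertices at height `0`.  Terminality enters through the lattice point `b i + n(F, b i)`, which
lies in the facet. -/
lemma zero_structure (C : TSR V) (hf : FacetFun V f) (b : Module.Basis (Fin d) ℝ (Fin d → ℝ))
    (hb1 : ∀ i, b i ∈ V ∧ f (b i) = 1) (hb2 : ∀ v ∈ V, f v = 1 → ∃ i, v = b i)
    (hd : {v | v ∈ V ∧ f v = 0}.ncard = d) :
    ∃ φ : Fin d → Fin d, (∀ i, φ i ≠ i) ∧ (∀ i, b (φ i) - b i ∈ V) ∧
      (∀ v ∈ V, f v = 0 → ∃ i, v = b (φ i) - b i) ∧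
      (∀ i, FacetFun V (f - b.coord i)) := by
  classical
  set Z := {v | v ∈ V ∧ f v = 0} with hZ
  have hfin : Z.Finite := V.finite_toSet.subset fun u hu => hu.1
  have := C.nonempty_fin
  choose! n hn using fun v (hv : v ∈ Z) => C.exists_neg_coord b hb1 hv.1 hv.2
  have hinj : Set.InjOn n Z := fun v hv w hw h =>
    C.zero_unique hf b hb1 hb2 hv.1 hw.1 hv.2 hw.2 (hn v hv) (by rw [h]; exact hn w hw)
  have himg : n '' Z = Set.univ := by
    apply Set.eq_of_subset_of_ncard_le (Set.subset_univ _) _ Set.finite_univ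
    rw [hinj.ncard_image, hd]
    simp [Set.ncard_univ]
  have hsurj : ∀ i, ∃ v ∈ Z, n v = i := fun i => by
    have : i ∈ n '' Z := by rw [himg]; trivial
    simpa using this
  choose y hyZ hny using hsurj
  have hyneg : ∀ i, b.coord i (y i) < 0 := fun i => by
    have := hn _ (hyZ i)
    rwa [hny] at this
  have honly : ∀ i j, b.coord j (y i) < 0 → j = i := by
    intro i j h
    have h1 : y i = y j := C.zero_unique hf b hb1 hb2 (hyZ i).1 (hyZ j).1 (hyZ i).2 (hyZ j).2 h
      (hyneg j)
    rw [← hny i, ← hny j, h1]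
  have key : ∀ i, ∃ j, y i = b j - b i := by
    intro i
    obtain ⟨k, hk1, -, hk⟩ := C.exists_tilt hf b hb1 hb2 i
    have hki := hk _ (hyZ i).1 (hyZ i).2 (hyneg i)
    have hf1 : f (b i + y i) = 1 := by rw [map_add, (hb1 i).2, (hyZ i).2, add_zero]
    have hge : ∀ j, 0 ≤ b.coord j (b i + y i) := by
      intro j
      rw [map_add, coord_basis]
      split_ifs with h
      · subst h
        nlinarith [hyneg i]
      · have : ¬ b.coord j (y i) < 0 := fun h' => h (honly i j h').symm
        linarith
    have hhull : b i + y i ∈ convexHull ℝ (V : Set (Fin d → ℝ)) := by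
      rw [← b.sum_repr (b i + y i)]
      refine (convex_convexHull ℝ _).sum_mem (fun j _ => hge j) ?_
        (fun j _ => subset_convexHull ℝ _ (hb1 j).1)
      exact (sum_coord_of_one b (fun i => (hb1 i).2) _).symm.trans hf1
    rcases C.term _ hhull ((C.lat _ (hb1 i).1).add (C.lat _ (hyZ i).1)) with h | h
    · rw [h, map_zero] at hf1
      norm_num at hf1
    · obtain ⟨j, hj⟩ := hb2 _ h hf1
      exact ⟨j, by rw [← hj]; abel⟩
  choose φ hφ using key
  have hφne : ∀ i, φ i ≠ i := fun i h => by
    have := hyneg i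
    rw [hφ, h, sub_self, map_zero] at this
    exact lt_irrefl _ this
  refine ⟨φ, hφne, fun i => hφ i ▸ (hyZ i).1, fun v hv h0 => ⟨n v, ?_⟩, fun i => ?_⟩
  · rw [← hφ]
    exact hinj ⟨hv, h0⟩ (hyZ _) (hny _).symm
  · obtain ⟨k, hk1, hg, hk⟩ := C.exists_tilt hf b hb1 hb2 i
    have hki := hk _ (hyZ i).1 (hyZ i).2 (hyneg i)
    rw [hφ, map_sub, coord_basis, coord_basis, if_neg (hφne i), if_pos rfl] at hki
    have : k = 1 := by linarith
    simpa [this] using hg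

/-- A nonzero lattice point of the polytope is a vertex, so it is not a proper convex
combination of two points of the polytope. -/
lemma no_average (C : TSR V) {p x q : Fin d → ℝ} (hp : IsLatticePt p) (hp0 : p ≠ 0)
    (hx : x ∈ convexHull ℝ (V : Set (Fin d → ℝ))) (hq : q ∈ convexHull ℝ (V : Set (Fin d → ℝ)))
    (hseg : p ∈ openSegment ℝ x q) (hxp : x ≠ p) : False := by
  have hmem : p ∈ convexHull ℝ (V : Set (Fin d → ℝ)) :=
    (convex_convexHull ℝ _).openSegment_subset hx hq hseg
  rcases C.term p hmem hp with h | h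
  · exact hp0 h
  · exact hxp (C.ext p h x hx q hq hseg)

end TSR

/-! ### From polytopes to facet functionals -/

/-- The functional `⟨u, ·⟩`. -/
noncomputable def pairingHom {d : ℕ} (u : Fin d → ℝ) : (Fin d → ℝ) →ₗ[ℝ] ℝ where
  toFun := pairing u
  map_add' x y := by simp [pairing, mul_add, Finset.sum_add_distrib]
  map_smul' c x := by simp [pairing, Finset.mul_sum, mul_left_comm]

lemma pairingHom_apply {d : ℕ} (u x : Fin d → ℝ) : pairingHom u x = pairing u x := rfl

lemma exists_pairing {d : ℕ} (f : (Fin d → ℝ) →ₗ[ℝ] ℝ) : ∃ u, f = pairingHom u := by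
  refine ⟨fun i => f (Pi.single i 1), LinearMap.pi_ext' fun i => LinearMap.ext_ring ?_⟩
  simp [pairingHom_apply, pairing, Pi.single_apply]

namespace Polytope

variable {d : ℕ} {P : Polytope d}

lemma le_of_verts_le {f : (Fin d → ℝ) →ₗ[ℝ] ℝ} {c : ℝ} (h : ∀ v ∈ P.verts, f v ≤ c)
    {x : Fin d → ℝ} (hx : x ∈ P.carrier) : f x ≤ c :=
  convexHull_min (s := (P.verts : Set (Fin d → ℝ))) (t := {x | f x ≤ c}) h
    (convex_halfSpace_le f.isLinear c) hx

/-- Both `t • x` and `-(t • x)` lie in a polytope around the origin for small `t`. -/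
lemma exists_small (h0 : 0 ∈ interior P.carrier) (x : Fin d → ℝ) :
    ∃ t : ℝ, 0 < t ∧ t • x ∈ P.carrier ∧ -(t • x) ∈ P.carrier := by
  have hn : P.carrier ∈ nhds (0 : Fin d → ℝ) := mem_interior_iff_mem_nhds.1 h0
  have h1 : Filter.Tendsto (fun t : ℝ => t • x) (nhds 0) (nhds 0) := by
    have : Continuous fun t : ℝ => t • x := by fun_prop
    simpa using this.tendsto 0
  have h2 : Filter.Tendsto (fun t : ℝ => -(t • x)) (nhds 0) (nhds 0) := by
    simpa using h1.neg
  have h3 : ∀ᶠ t in nhdsWithin (0 : ℝ) (Set.Ioi 0), 0 < t ∧ t • x ∈ P.carrier ∧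
      -(t • x) ∈ P.carrier := by
    filter_upwards [self_mem_nhdsWithin, nhdsWithin_le_nhds (h1 hn), nhdsWithin_le_nhds (h2 hn)]
      with t ht h h' using ⟨ht, h, h'⟩
  exact h3.exists

lemma exists_vert_neg (h0 : 0 ∈ interior P.carrier) {f : (Fin d → ℝ) →ₗ[ℝ] ℝ} (hf : f ≠ 0) :
    ∃ v ∈ P.verts, f v < 0 := by
  by_contra! h
  apply hf
  ext1 x
  obtain ⟨t, ht, h1, h2⟩ := exists_small h0 (Pi.single x 1)
  have hle : ∀ v ∈ P.verts, (-f) v ≤ 0 := fun v hv => by simpa using h v hv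
  have h3 := le_of_verts_le hle h1
  have h4 := le_of_verts_le hle h2
  simp only [LinearMap.neg_apply, map_smul, map_neg, smul_eq_mul] at h3 h4
  apply LinearMap.ext_ring
  have : t * f (Pi.single x 1) = 0 := by linarith
  simpa [ht.ne'] using this

/-- A facet functional cuts out a facet. -/
lemma isFacet_of_facetFun (hd : 0 < d) {u : Fin d → ℝ} (hu : FacetFun P.verts (pairingHom u)) :
    P.IsFacet {x | x ∈ P.carrier ∧ pairing u x = 1} := by
  have hsub : {v | v ∈ P.verts ∧ pairingHom u v = 1} ⊆ {x | x ∈ P.carrier ∧ pairing u x = 1} :=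
    fun v hv => ⟨subset_convexHull ℝ _ hv.1, hv.2⟩
  have hne : {v | v ∈ P.verts ∧ pairingHom u v = 1}.Nonempty := by
    by_contra h
    have h1 := hu.2
    rw [Set.not_nonempty_iff_eq_empty.1 h, Submodule.span_empty] at h1
    have h2 := finrank_top ℝ (Fin d → ℝ)
    rw [← h1, finrank_bot, Module.finrank_fin_fun] at h2
    omega
  obtain ⟨v₀, hv₀⟩ := hne
  refine ⟨⟨u, ?_, 1, fun x hx => le_of_verts_le hu.1 hx, rfl⟩, ⟨v₀, hsub hv₀⟩, ?_⟩
  · rintro rfl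
    have := hv₀.2
    simp [pairingHom_apply, pairing] at this
  · set F := {x | x ∈ P.carrier ∧ pairing u x = 1}
    have hker : vectorSpan ℝ F ≤ LinearMap.ker (pairingHom u) := by
      rw [vectorSpan_def, Submodule.span_le]
      rintro _ ⟨x, hx, y, hy, rfl⟩
      have h1 : pairingHom u x = 1 := hx.2
      have h2 : pairingHom u y = 1 := hy.2
      simp [h1, h2]
    have hlt : Module.finrank ℝ (vectorSpan ℝ F) < d := by
      have hne : vectorSpan ℝ F ≠ ⊤ := fun h => by
        have h1 : v₀ ∈ vectorSpan ℝ F := h ▸ Submodule.mem_top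
        have h2 := hker h1
        rw [LinearMap.mem_ker, hv₀.2] at h2
        norm_num at h2
      simpa using Submodule.finrank_lt hne
    have htop : Submodule.span ℝ {v₀} ⊔ vectorSpan ℝ F = ⊤ := by
      rw [eq_top_iff, ← hu.2, Submodule.span_le]
      intro v hv
      have h1 : v - v₀ ∈ vectorSpan ℝ F := vsub_mem_vectorSpan ℝ (hsub hv) (hsub hv₀)
      have h2 := Submodule.add_mem_sup (Submodule.mem_span_singleton_self (R := ℝ) v₀) h1
      simpa using h2
    have hle := Submodule.finrank_add_le_finrank_add_finrank (Submodule.span ℝ {v₀})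
      (vectorSpan ℝ F)
    rw [htop, finrank_top, Module.finrank_fin_fun] at hle
    have h1 : Module.finrank ℝ (Submodule.span ℝ {v₀}) ≤ 1 := by
      simpa using finrank_span_le_card (R := ℝ) ({v₀} : Set (Fin d → ℝ))
    omega

lemma tsr (hd : 0 < d) (hrefl : P.IsReflexive) (hsimp : P.IsSimplicial) (hterm : P.IsTerminal) :
    TSR P.verts where
  lat := hrefl.1
  neg _ hf := exists_vert_neg hrefl.2.1 hf
  int f hf x hx := by
    obtain ⟨u, rfl⟩ := exists_pairing f
    obtain ⟨w, hw⟩ := hrefl.2.2 _ (isFacet_of_facetFun hd hf)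
    have heq : pairingHom u = pairingHom fun i => (w i : ℝ) := by
      refine LinearMap.ext_on hf.2 fun v hv => ?_
      rw [hv.2]
      exact (hw v ⟨subset_convexHull ℝ _ hv.1, hv.2⟩).symm
    choose z hz using hx
    refine ⟨∑ i, w i * z i, ?_⟩
    rw [heq]
    simp [pairingHom_apply, pairing, hz]
  card f hf := by
    obtain ⟨u, rfl⟩ := exists_pairing f
    have h := hsimp _ (isFacet_of_facetFun hd hf)
    convert h using 2
    ext v
    constructor
    · exact fun hv => ⟨hv.1, subset_convexHull ℝ _ hv.1, hv.2⟩
    · exact fun hv => ⟨hv.1, hv.2.2⟩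
  ext p hp x hx y hy h := (mem_extremePoints.1 (P.vertsExtreme p hp)).2 x hx y hy h |>.1
  term := hterm
  zero_notMem h := by
    obtain ⟨t, ht, h1, h2⟩ := exists_small hrefl.2.1 (fun _ => 1)
    have := (mem_extremePoints.1 (P.vertsExtreme 0 h)).2 _ h1 _ h2
      ⟨1 / 2, 1 / 2, by norm_num, by norm_num, by norm_num, by simp⟩
    have h3 := congrFun this.1 ⟨0, hd⟩
    simp [ht.ne'] at h3
  zero_mem := interior_subset hrefl.2.1

/-- A facet `F` is cut out by `u_F`, and `u_F` is a facet functional. -/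
lemma facetFun_of_isFacet (hd : 0 < d) (h0 : 0 ∈ interior P.carrier) {F : Set (Fin d → ℝ)}
    (hF : P.IsFacet F) {uF : Fin d → ℝ} (huF : P.IsUF F uF) :
    FacetFun P.verts (pairingHom uF) ∧
      ∀ v ∈ P.verts, (v ∈ F ↔ pairingHom uF v = 1) := by
  obtain ⟨⟨u, hu, c, hle, rfl⟩, ⟨x₀, hx₀⟩, hdim⟩ := hF
  set F := {x | x ∈ P.carrier ∧ pairing u x = c} with hFdef
  have hu0 : -pairingHom u ≠ 0 := fun h => hu <| by
    ext i
    have := LinearMap.congr_fun h (Pi.single i 1)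
    simpa [pairingHom_apply, pairing, Pi.single_apply] using this
  have hc : 0 < c := by
    obtain ⟨v, hv, hneg⟩ := exists_vert_neg h0 hu0
    have h1 := hle v (subset_convexHull ℝ _ hv)
    rw [LinearMap.neg_apply, pairingHom_apply] at hneg
    linarith
  have hspanF : Submodule.span ℝ F = ⊤ := by
    have h1 : vectorSpan ℝ F ≤ LinearMap.ker (pairingHom u) := by
      rw [vectorSpan_def, Submodule.span_le]
      rintro _ ⟨x, hx, y, hy, rfl⟩
      have h1 : pairingHom u x = c := hx.2
      have h2 : pairingHom u y = c := hy.2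
      simp [h1, h2]
    have h2 : vectorSpan ℝ F ≤ Submodule.span ℝ F := by
      rw [vectorSpan_def, Submodule.span_le]
      rintro _ ⟨x, hx, y, hy, rfl⟩
      exact Submodule.sub_mem _ (Submodule.subset_span hx) (Submodule.subset_span hy)
    have h3 : vectorSpan ℝ F < Submodule.span ℝ F := by
      refine lt_of_le_of_ne h2 fun h => ?_
      have h4 : x₀ ∈ vectorSpan ℝ F := h ▸ Submodule.subset_span hx₀
      have h5 : pairingHom u x₀ = 0 := h1 h4
      rw [pairingHom_apply, hx₀.2] at h5
      exact hc.ne' h5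
    have h4 := Submodule.finrank_lt_finrank_of_lt h3
    apply Submodule.eq_top_of_finrank_eq
    have h5 := Submodule.finrank_le (Submodule.span ℝ F)
    rw [Module.finrank_fin_fun] at h5 ⊢
    omega
  have hFsub : F ⊆ Submodule.span ℝ {v | v ∈ P.verts ∧ pairing u v = c} := by
    intro x hx
    obtain ⟨w, hw0, hw1, hwx⟩ := Finset.mem_convexHull'.1 hx.1
    have hsum : ∑ v ∈ P.verts, w v * (c - pairing u v) = 0 := by
      have h1 : pairingHom u x = c := hx.2
      rw [← hwx, map_sum] at h1
      simp only [map_smul, smul_eq_mul, pairingHom_apply] at h1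
      simp only [mul_sub, Finset.sum_sub_distrib, h1, ← Finset.sum_mul, hw1]
      ring
    rw [Finset.sum_eq_zero_iff_of_nonneg fun v hv => mul_nonneg (hw0 v hv)
      (sub_nonneg.2 (hle v (subset_convexHull ℝ _ hv)))] at hsum
    rw [← hwx]
    refine Submodule.sum_mem _ fun v hv => ?_
    rcases mul_eq_zero.1 (hsum v hv) with h | h
    · rw [h, zero_smul]; exact Submodule.zero_mem _
    · exact Submodule.smul_mem _ _ (Submodule.subset_span ⟨hv, by linarith⟩)
  have heq : pairingHom uF = c⁻¹ • pairingHom u := by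
    refine LinearMap.ext_on hspanF fun x hx => ?_
    have h1 : pairingHom u x = c := hx.2
    have h2 : pairingHom uF x = 1 := huF x hx
    simp [h1, h2, hc.ne']
  have hiff : ∀ v, pairingHom uF v = 1 ↔ pairing u v = c := fun v => by
    rw [heq, LinearMap.smul_apply, smul_eq_mul, inv_mul_eq_one₀ hc.ne', eq_comm, pairingHom_apply]
  refine ⟨⟨fun v hv => ?_, ?_⟩, fun v hv => ?_⟩
  · rw [heq, LinearMap.smul_apply, smul_eq_mul, inv_mul_le_iff₀ hc, mul_one]
    exact hle v (subset_convexHull ℝ _ hv)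
  · simp only [hiff]
    rw [eq_top_iff, ← hspanF, Submodule.span_le]
    exact hFsub
  · rw [hiff]
    exact ⟨fun h => h.2, fun h => ⟨subset_convexHull ℝ _ hv, h⟩⟩

end Polytope

/-! ### Heights over a facet when the vertices sum to zero -/

namespace TSR

variable {d : ℕ} {V : Finset (Fin d → ℝ)} {f g : (Fin d → ℝ) →ₗ[ℝ] ℝ}

/-- If the vertices sum to `0`, every facet has all vertices at height at least `-2`; a vertex
at height `-2` is unique and forces `d` vertices at height `0`.  The weight
`h = g + 1 - 2·[g = 1] - [g = 0]` is nonpositive on `V` and sums to at least `-1`. -/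
lemma levels (C : TSR V) (hg : FacetFun V g) (hs : ∑ v ∈ V, g v = 0)
    (hcard : (V.card : ℝ) = 3 * d - 1) :
    (∀ v ∈ V, -2 ≤ g v) ∧ ∀ v ∈ V, g v = -2 →
      {v | v ∈ V ∧ g v = 0}.ncard = d ∧ ∀ w ∈ V, w ≠ v → -1 ≤ g w := by
  classical
  have hn1 : ((V.filter fun v => g v = 1).card : ℝ) = d := by
    have := C.card g hg
    rw [← Set.ncard_coe_finset]
    simpa using this
  have hn0' : {v | v ∈ V ∧ g v = 0}.ncard = (V.filter fun v => g v = 0).card := by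
    rw [← Set.ncard_coe_finset]
    simp
  have hn0 : ((V.filter fun v => g v = 0).card : ℝ) ≤ d := by
    exact_mod_cast hn0' ▸ C.card_zero_le hg
  have hneg : ∀ v ∈ V, g v ≠ 1 → g v ≠ 0 → g v ≤ -1 := by
    intro v hv h1 h0
    obtain ⟨m, hm⟩ := C.int g hg v (C.lat v hv)
    have h2 := hg.1 v hv
    rw [hm] at h1 h0 h2 ⊢
    norm_cast at *
    omega
  set h : (Fin d → ℝ) → ℝ := fun v =>
    g v + 1 - (if g v = 1 then 2 else 0) - (if g v = 0 then 1 else 0) with hh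
  have hle : ∀ v ∈ V, 0 ≤ -h v := by
    intro v hv
    have := hneg v hv
    simp only [hh]
    by_cases h1 : g v = 1
    · simp [h1]; norm_num
    · by_cases h0 : g v = 0
      · simp [h0]
      · simp only [if_neg h1, if_neg h0]
        linarith [this h1 h0]
  have hsum : ∑ v ∈ V, -h v = (V.filter fun v => g v = 0).card - d + 1 := by
    simp only [hh, Finset.sum_neg_distrib, Finset.sum_sub_distrib, Finset.sum_add_distrib, hs,
      ← Finset.sum_filter, Finset.sum_const, nsmul_eq_mul, hn1, hcard]
    ring
  have hone : ∀ v ∈ V, -h v ≤ (V.filter fun v => g v = 0).card - d + 1 := fun v hv =>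
    hsum ▸ Finset.single_le_sum (f := fun v => -h v) hle hv
  refine ⟨fun v hv => ?_, fun v hv hv2 => ⟨?_, fun w hw hwv => ?_⟩⟩
  · by_contra hlt
    have := hone v hv
    simp only [hh] at this
    rw [if_neg (by linarith), if_neg (by linarith)] at this
    linarith
  · have := hone v hv
    simp only [hh] at this
    rw [if_neg (by linarith), if_neg (by linarith), hv2] at this
    have h1 : ((V.filter fun v => g v = 0).card : ℝ) = d := by linarith
    rw [hn0']
    exact_mod_cast h1
  · by_contra hlt
    have h1 : ∑ u ∈ {v, w}, -h u ≤ ∑ v ∈ V, -h v :=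
      Finset.sum_le_sum_of_subset_of_nonneg (by simp [Finset.insert_subset_iff, hv, hw])
        (fun u hu _ => hle u hu)
    rw [Finset.sum_pair hwv.symm, hsum] at h1
    simp only [hh] at h1
    rw [if_neg (by linarith), if_neg (by linarith), if_neg (by linarith), if_neg (by linarith),
      hv2] at h1
    linarith

/-- Basis-free form of `zero_structure`, convenient for comparing different facets. -/
lemma pair_structure (C : TSR V) (hg : FacetFun V g) (hd : {v | v ∈ V ∧ g v = 0}.ncard = d) :
    (∀ p ∈ V, g p = 1 → ∃ q ∈ V, g q = 1 ∧ q ≠ p ∧ q - p ∈ V) ∧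
    ∀ v ∈ V, g v = 0 → ∃ p ∈ V, ∃ q ∈ V, g p = 1 ∧ g q = 1 ∧ q ≠ p ∧ v = q - p := by
  obtain ⟨b, hb1, hb2⟩ := C.exists_basis hg
  obtain ⟨φ, hne, hφV, hφ0, -⟩ := C.zero_structure hg b hb1 hb2 hd
  have hbne : ∀ i, b (φ i) ≠ b i := fun i h => hne i (b.injective h)
  constructor
  · intro p hp h1
    obtain ⟨i, rfl⟩ := hb2 p hp h1
    exact ⟨b (φ i), (hb1 _).1, (hb1 _).2, hbne i, hφV i⟩
  · intro v hv h0
    obtain ⟨i, rfl⟩ := hφ0 v hv h0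
    exact ⟨b i, (hb1 i).1, b (φ i), (hb1 _).1, (hb1 i).2, (hb1 _).2, hbne i, rfl⟩

/-- For each vertex `p` of a facet, at most one vertex `q` of the facet has `q - p` as a vertex. -/
lemma pair_unique (C : TSR V) (hg : FacetFun V g) {p q r : Fin d → ℝ} (hp : p ∈ V ∧ g p = 1)
    (hq : q ∈ V ∧ g q = 1) (hr : r ∈ V ∧ g r = 1) (hqp : q - p ∈ V) (hrp : r - p ∈ V) :
    q = r := by
  have hne : ∀ s, s - p ∈ V → s ≠ p := fun s hs h => C.zero_notMem (by simpa [h] using hs)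
  have hq' := hne q hqp
  have hr' := hne r hrp
  obtain ⟨b, hb1, hb2⟩ := C.exists_basis hg
  obtain ⟨i, rfl⟩ := hb2 p hp.1 hp.2
  obtain ⟨j, rfl⟩ := hb2 q hq.1 hq.2
  obtain ⟨k, rfl⟩ := hb2 r hr.1 hr.2
  have hji : j ≠ i := fun h => hq' (by rw [h])
  have hki : k ≠ i := fun h => hr' (by rw [h])
  have := C.zero_unique hg b hb1 hb2 (i := i) hqp hrp (by simp [hb1]) (by simp [hb1])
    (by simp [map_sub, hji]) (by simp [map_sub, hki])
  exact sub_left_injective this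

/-! ### The structure of a facet with a vertex at height `-2` -/

/-- Over a facet with vertices `e i`, the vertex `z` at height `-2` is `-e a - e b`. -/
lemma bottom_vertex (C : TSR V) (hf : FacetFun V f) (e : Module.Basis (Fin d) ℝ (Fin d → ℝ))
    (he1 : ∀ i, e i ∈ V ∧ f (e i) = 1) (hg : ∀ i, FacetFun V (f - e.coord i))
    (hlev : ∀ i, ∀ v ∈ V, -2 ≤ (f - e.coord i) v) {z : Fin d → ℝ} (hz : z ∈ V)
    (hfz : f z = -2) : ∃ a b, a ≠ b ∧ z = -e a - e b := by
  have hle : ∀ i, e.coord i z ≤ 0 := fun i => by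
    have := hlev i z hz
    rw [LinearMap.sub_apply, hfz] at this
    linarith
  have hcoord : ∀ i, e.coord i z < 0 → e.coord i z ≤ -1 := fun i h => by
    obtain ⟨m, hm⟩ := C.int f hf z (C.lat z hz)
    obtain ⟨n, hn⟩ := C.int _ (hg i) z (C.lat z hz)
    have h1 : e.coord i z = ((m - n : ℤ) : ℝ) := by
      push_cast
      rw [← hm, ← hn, LinearMap.sub_apply]
      ring
    rw [h1] at h ⊢
    norm_cast at *
    omega
  have hsum := sum_coord_of_one e (fun i => (he1 i).2)
  have hex : ∃ a, e.coord a z < 0 := by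
    by_contra! h
    have := hsum z
    rw [hfz] at this
    have h2 := Finset.sum_nonneg fun i (_ : i ∈ univ) => h i
    linarith
  obtain ⟨a, ha⟩ := hex
  by_cases hb : ∃ b, b ≠ a ∧ e.coord b z < 0
  · obtain ⟨b, hba, hb⟩ := hb
    refine ⟨a, b, hba.symm, ?_⟩
    have hle' : ∀ i, e.coord i (z + e a + e b) ≤ 0 := fun i => by
      simp only [map_add, coord_basis]
      have h1 := hcoord i
      have h2 := hle i
      by_cases hai : a = i
      · subst hai
        rw [if_pos rfl, if_neg hba]
        linarith [h1 ha]
      · by_cases hbi : b = i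
        · subst hbi
          rw [if_neg hai, if_pos rfl]
          linarith [h1 hb]
        · rw [if_neg hai, if_neg hbi]
          linarith
    have h0 : ∑ i, e.coord i (z + e a + e b) = 0 := by
      rw [← hsum, map_add, map_add, hfz, (he1 a).2, (he1 b).2]
      norm_num
    rw [Finset.sum_eq_zero_iff_of_nonpos fun i _ => hle' i] at h0
    have : z + e a + e b = 0 := e.ext_elem fun i => by
      rw [map_zero]
      exact h0 i (mem_univ i)
    rw [add_assoc] at this
    rw [eq_neg_of_add_eq_zero_left this]
    abel
  · exfalso
    push Not at hb
    have hb' : ∀ i, i ≠ a → e.coord i z = 0 := fun i hi => le_antisymm (hle i) (hb i hi)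
    have ha2 : e.coord a z = -2 := by
      rw [← hfz, hsum z]
      exact (Finset.sum_eq_single a (fun i _ hi => hb' i hi) (by simp)).symm
    have hza : z = (2 : ℝ) • -e a := e.ext_elem fun i => by
      change e.coord i z = e.coord i _
      rw [map_smul, map_neg, coord_basis]
      by_cases h : a = i
      · subst h; rw [ha2]; simp
      · rw [hb' i (Ne.symm h)]; simp [h]
    refine C.no_average (p := -e a) (C.lat _ (he1 a).1).neg (neg_ne_zero.2 (e.ne_zero a))
      (subset_convexHull ℝ _ hz) C.zero_mem
      ⟨1 / 2, 1 / 2, by norm_num, by norm_num, by norm_num, ?_⟩ ?_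
    · rw [hza, smul_zero, add_zero, smul_smul]
      norm_num
    · intro h
      rw [h] at ha2
      simp at ha2

/-- The data attached to a facet with `d` vertices at height `0` and the vertex
`-e a - e b` at height `-2`, when the vertices sum to `0`: the facet has vertices `e i`, the vertices at height `0` are
`e (φ i) - e i`, and the neighbouring facets are cut out by `f - e.coord i`. -/
structure Config (V : Finset (Fin d → ℝ)) (f : (Fin d → ℝ) →ₗ[ℝ] ℝ)
    (e : Module.Basis (Fin d) ℝ (Fin d → ℝ)) (φ : Fin d → Fin d) (a b : Fin d) : Prop where
  tsr : TSR V
  facet : FacetFun V f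
  mem : ∀ i, e i ∈ V
  one : ∀ i, f (e i) = 1
  of_one : ∀ v ∈ V, f v = 1 → ∃ i, v = e i
  ne : ∀ i, φ i ≠ i
  phi_mem : ∀ i, e (φ i) - e i ∈ V
  of_zero : ∀ v ∈ V, f v = 0 → ∃ i, v = e (φ i) - e i
  nbr : ∀ i, FacetFun V (f - e.coord i)
  ab : a ≠ b
  bot : -e a - e b ∈ V
  ge : ∀ v ∈ V, v ≠ -e a - e b → -1 ≤ f v
  /-- For `i ≠ a, b` the neighbouring facet again has `d` vertices at height `0`. -/
  nbr_card : ∀ i, i ≠ a → i ≠ b → {v | v ∈ V ∧ (f - e.coord i) v = 0}.ncard = d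
  nbr_ge_one : ∀ i, i ≠ a → i ≠ b → ∀ v ∈ V, v ≠ -e a - e b → -1 ≤ f v - e.coord i v

namespace Config

variable {e : Module.Basis (Fin d) ℝ (Fin d → ℝ)} {φ : Fin d → Fin d} {a b : Fin d}

lemma swap (K : Config V f e φ a b) : Config V f e φ b a where
  __ := K
  ab := K.ab.symm
  bot := by have := K.bot; rwa [sub_eq_add_neg, add_comm, ← sub_eq_add_neg] at this
  ge v hv h := K.ge v hv (by rwa [sub_eq_add_neg, add_comm, ← sub_eq_add_neg] at h)
  nbr_card i h1 h2 := K.nbr_card i h2 h1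
  nbr_ge_one i h1 h2 v hv h := K.nbr_ge_one i h2 h1 v hv
    (by rwa [sub_eq_add_neg, add_comm, ← sub_eq_add_neg] at h)

/-- If `φ a = b`, then `-e a` is the midpoint of the vertices `-e a - e b` and `e b - e a`. -/
lemma phi_ne (K : Config V f e φ a b) : φ a ≠ b := by
  intro h
  have h1 := K.phi_mem a
  rw [h] at h1
  refine K.tsr.no_average (p := -e a) (K.tsr.lat _ (K.mem a)).neg (neg_ne_zero.2 (e.ne_zero a))
    (subset_convexHull ℝ _ K.bot) (subset_convexHull ℝ _ h1) ⟨1 / 2, 1 / 2, by norm_num, by norm_num, by norm_num, ?_⟩ ?_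
  · module
  · intro h
    exact e.ne_zero b (by simpa using h)

lemma nbr_of_one (K : Config V f e φ a b) (i : Fin d) {q : Fin d → ℝ} (hq : q ∈ V)
    (h1 : (f - e.coord i) q = 1) : (∃ j, j ≠ i ∧ q = e j) ∨ q = e (φ i) - e i := by
  by_cases h0 : e.coord i q = 0
  · rw [LinearMap.sub_apply, h0, sub_zero] at h1
    obtain ⟨j, rfl⟩ := K.of_one q hq h1
    refine .inl ⟨j, fun h => ?_, rfl⟩
    rw [coord_basis, if_pos h] at h0
    norm_num at h0
  · refine .inr (K.tsr.neighbor_unique (f := f) (k := 1) (i := i) e (fun j => ⟨K.mem j, K.one j⟩)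
      (by rw [one_smul]; exact K.nbr i) hq (K.phi_mem i) (by simpa using h1) ?_ h0 ?_)
    · rw [map_sub, map_sub, K.one, K.one, coord_basis, coord_basis, if_neg (K.ne i), if_pos rfl]
      norm_num
    · rw [map_sub, coord_basis, coord_basis, if_neg (K.ne i), if_pos rfl]
      norm_num

lemma nbr_basis (K : Config V f e φ a b) {i j : Fin d} (h : j ≠ i) :
    e j ∈ V ∧ (f - e.coord i) (e j) = 1 :=
  ⟨K.mem j, by rw [LinearMap.sub_apply, K.one, coord_basis, if_neg h, sub_zero]⟩

lemma nbr_phi (K : Config V f e φ a b) (i : Fin d) :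
    e (φ i) - e i ∈ V ∧ (f - e.coord i) (e (φ i) - e i) = 1 :=
  ⟨K.phi_mem i, by
    rw [LinearMap.sub_apply, map_sub, map_sub, K.one, K.one, coord_basis, coord_basis,
      if_neg (K.ne i), if_pos rfl]
    norm_num⟩

/-- If `φ k = i`, then over `N(F, e i)` the vertex `e k - e i` no longer has height `0`, and the
vertex at height `0` taking over its role is `(e (φ i) - e i) - e k`. -/
lemma mem_of_phi (K : Config V f e φ a b) {i k : Fin d} (ha : i ≠ a) (hb : i ≠ b)
    (hk : φ k = i) : e (φ i) - e i - e k ∈ V := by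
  have hki : k ≠ i := fun h => K.ne k (hk.trans h.symm)
  obtain ⟨q, hq, hq1, -, hqk⟩ := (K.tsr.pair_structure (K.nbr i) (K.nbr_card i ha hb)).1 (e k)
    (K.mem k) (K.nbr_basis hki).2
  rcases K.nbr_of_one i hq hq1 with ⟨j, hji, rfl⟩ | rfl
  · have h1 := K.tsr.pair_unique K.facet ⟨K.mem k, K.one k⟩ ⟨K.mem j, K.one j⟩
      ⟨K.mem (φ k), K.one _⟩ hqk (K.phi_mem k)
    exact absurd ((e.injective h1).trans hk) hji
  · exact hqk

/-- Converse of `mem_of_phi`: a vertex at height `-1` with `i`-th coordinate `-1` has height `0`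
over `N(F, e i)`, so it arises from some `k` with `φ k = i`. -/
lemma phi_of_mem (K : Config V f e φ a b) {i : Fin d} (ha : i ≠ a) (hb : i ≠ b)
    {x : Fin d → ℝ} (hx : x ∈ V) (hfx : f x = -1) (hxi : e.coord i x = -1) :
    ∃ k, φ k = i ∧ x = e (φ i) - e i - e k := by
  obtain ⟨p, hp, q, hq, hp1, hq1, hqp, rfl⟩ :=
    (K.tsr.pair_structure (K.nbr i) (K.nbr_card i ha hb)).2 x hx
      (by rw [LinearMap.sub_apply, hfx, hxi]; norm_num)
  rcases K.nbr_of_one i hq hq1 with ⟨j, hji, rfl⟩ | rfl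
  · rcases K.nbr_of_one i hp hp1 with ⟨l, hli, rfl⟩ | rfl
    · simp [hji, hli] at hxi
    · simp only [map_sub, coord_basis, if_neg hji, if_neg (K.ne i), if_true] at hxi
      norm_num at hxi
  · rcases K.nbr_of_one i hp hp1 with ⟨k, hki, rfl⟩ | rfl
    · refine ⟨k, ?_, rfl⟩
      by_contra hne
      have h1 := K.tsr.pair_unique (K.nbr i) (K.nbr_basis hki) (K.nbr_phi i) (K.nbr_basis hne) hx
        (K.phi_mem k)
      have h2 := congrArg (e.coord i) h1
      simp only [map_sub, coord_basis, if_neg hne, if_neg (K.ne i), if_true] at h2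
      norm_num at h2
    · exact absurd rfl hqp

/-- For `i ≠ a, b` the only possible preimage of `i` under `φ` is `φ i`: otherwise the vertex
`e (φ i) - e i - e k` of `mem_of_phi` is forced to have `{φ i, k} = {a, b}`, and then `-e k` is
the average of three vertices. -/
lemma phi_phi (K : Config V f e φ a b) {i k : Fin d} (ha : i ≠ a) (hb : i ≠ b)
    (hk : φ k = i) : φ i = k := by
  by_contra hne
  have hki : k ≠ i := fun h => K.ne k (hk.trans h.symm)
  have hii := K.ne i
  have hx := K.mem_of_phi ha hb hk
  have hfx : f (e (φ i) - e i - e k) = -1 := by simp only [map_sub, K.one]; norm_num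
  have hxz : e (φ i) - e i - e k ≠ -e a - e b := fun h => by
    have := congrArg (e.coord i) h
    simp only [map_sub, map_neg, coord_basis, if_neg hii, if_neg hki, if_neg ha.symm,
      if_neg hb.symm, if_true] at this
    norm_num at this
  have hj : φ i = a ∨ φ i = b := by
    by_contra! hj
    have := K.nbr_ge_one _ hj.1 hj.2 _ hx hxz
    rw [hfx] at this
    simp only [map_sub, coord_basis, if_neg hii.symm, if_neg (Ne.symm hne), if_true] at this
    norm_num at this
  have hk' : k = a ∨ k = b := by
    by_contra! hk'
    obtain ⟨l, hl, hxl⟩ := K.phi_of_mem hk'.1 hk'.2 hx hfx (by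
      simp only [map_sub, coord_basis, if_neg hne, if_neg hki.symm, if_true]; norm_num)
    have := congrArg (e.coord i) hxl
    rw [hk] at this
    simp only [map_sub, coord_basis, if_neg hii, if_neg hki, if_true] at this
    split_ifs at this <;> norm_num at this
  have hz : -e (φ i) - e k ∈ V := by
    have := K.bot
    have := K.swap.bot
    rcases hj with h | h <;> rcases hk' with h' | h' <;> simp_all
  have hy := K.phi_mem k
  rw [hk] at hy
  -- `-e k` is the average of the vertices `e (φ i) - e i - e k`, `e i - e k`, `-e (φ i) - e k`
  have hmid : (1 / 2 : ℝ) • (e i - e k) + (1 / 2 : ℝ) • (-e (φ i) - e k) ∈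
      convexHull ℝ (V : Set (Fin d → ℝ)) :=
    convex_convexHull ℝ _ (subset_convexHull ℝ _ hy) (subset_convexHull ℝ _ hz) (by norm_num) (by norm_num) (by norm_num)
  refine K.tsr.no_average (p := -e k) (K.tsr.lat _ (K.mem k)).neg (neg_ne_zero.2 (e.ne_zero k))
    (subset_convexHull ℝ _ hx) hmid ⟨1 / 3, 2 / 3, by norm_num, by norm_num, by norm_num, ?_⟩ ?_
  · module
  · intro h
    have := congrArg (e.coord i) h
    simp only [map_sub, map_neg, coord_basis, if_neg hii, if_neg hki, if_true] at this
    norm_num at this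

lemma int_coord (K : Config V f e φ a b) (i : Fin d) {x : Fin d → ℝ} (hx : x ∈ V) :
    ∃ m : ℤ, e.coord i x = m := by
  obtain ⟨m, hm⟩ := K.tsr.int f K.facet x (K.tsr.lat x hx)
  obtain ⟨n, hn⟩ := K.tsr.int _ (K.nbr i) x (K.tsr.lat x hx)
  exact ⟨m - n, by push_cast; rw [← hm, ← hn, LinearMap.sub_apply]; ring⟩

/-- All vertices at height `-1` are negatives of vertices of the facet. -/
lemma of_neg_one (K : Config V f e φ a b) {x : Fin d → ℝ} (hx : x ∈ V) (hfx : f x = -1) :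
    ∃ i, x = -e i := by
  have hxz : x ≠ -e a - e b := fun h => by
    rw [h, map_sub, map_neg, K.one, K.one] at hfx
    norm_num at hfx
  have hge : ∀ i, -1 ≤ e.coord i x := by
    intro i
    obtain ⟨m, hm⟩ := K.int_coord i hx
    have h1 := (K.nbr i).1 x hx
    have h2 : (f - e.coord i) x ≠ 1 := fun h => by
      rcases K.nbr_of_one i hx h with ⟨j, -, rfl⟩ | rfl
      · rw [K.one] at hfx; norm_num at hfx
      · rw [map_sub, K.one, K.one] at hfx; norm_num at hfx
    rw [LinearMap.sub_apply, hfx, hm] at h1 h2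
    rw [hm]
    have h3 : ((-1 - m : ℤ) : ℝ) ≤ (1 : ℤ) := by push_cast; exact h1
    have h4 : (-1 - m : ℤ) ≠ 1 := fun h => h2 (by exact_mod_cast congrArg (Int.cast (R := ℝ)) h)
    have h5 : (-1 : ℤ) ≤ m := by
      have : -1 - m ≤ 1 := by exact_mod_cast h3
      omega
    exact_mod_cast h5
  by_cases hex : ∃ i, i ≠ a ∧ i ≠ b ∧ e.coord i x < 0
  · obtain ⟨i, ha, hb, hlt⟩ := hex
    have hi : e.coord i x = -1 := by
      obtain ⟨m, hm⟩ := K.int_coord i hx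
      have := hge i
      rw [hm] at this hlt ⊢
      norm_cast at *
      omega
    obtain ⟨k, hk, hxk⟩ := K.phi_of_mem ha hb hx hfx hi
    refine ⟨i, ?_⟩
    rw [hxk, K.phi_phi ha hb hk]
    abel
  · push Not at hex
    have h0 : ∀ i, i ≠ a → i ≠ b → e.coord i x = 0 := fun i ha hb => by
      have h1 := K.nbr_ge_one i ha hb x hx hxz
      have h2 := hex i ha hb
      linarith
    have hsum : e.coord a x + e.coord b x = -1 := by
      rw [← hfx, sum_coord_of_one e K.one x]
      rw [← Finset.sum_pair (f := fun i => e.coord i x) K.ab]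
      refine Finset.sum_subset (Finset.subset_univ _) fun i _ hi => ?_
      simp only [Finset.mem_insert, Finset.mem_singleton, not_or] at hi
      exact h0 i hi.1 hi.2
    obtain ⟨m, hm⟩ := K.int_coord a hx
    have hcase : e.coord a x = -1 ∧ e.coord b x = 0 ∨ e.coord a x = 0 ∧ e.coord b x = -1 := by
      have h1 := hge a
      have h2 := hge b
      have h3 : e.coord b x = ((-1 - m : ℤ) : ℝ) := by push_cast; linarith
      rw [hm] at h1 ⊢
      rw [h3] at h2 ⊢
      norm_cast at *
      omega
    rcases hcase with ⟨h1, h2⟩ | ⟨h1, h2⟩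
    · refine ⟨a, e.ext_elem fun i => ?_⟩
      change e.coord i x = e.coord i _
      rw [map_neg, coord_basis]
      by_cases hai : i = a
      · subst hai; rw [h1, if_pos rfl]
      · rw [if_neg (Ne.symm hai), neg_zero]
        by_cases hbi : i = b
        · subst hbi; exact h2
        · exact h0 i hai hbi
    · refine ⟨b, e.ext_elem fun i => ?_⟩
      change e.coord i x = e.coord i _
      rw [map_neg, coord_basis]
      by_cases hbi : i = b
      · subst hbi; rw [h2, if_pos rfl]
      · rw [if_neg (Ne.symm hbi), neg_zero]
        by_cases hai : i = a
        · subst hai; exact h1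
        · exact h0 i hai hbi

lemma classify (K : Config V f e φ a b) {v : Fin d → ℝ} (hv : v ∈ V) :
    v = -e a - e b ∨ (∃ j, v = e j) ∨ (∃ j, v = e (φ j) - e j) ∨ ∃ j, v = -e j := by
  by_cases hz : v = -e a - e b
  · exact .inl hz
  · obtain ⟨m, hm⟩ := K.tsr.int f K.facet v (K.tsr.lat v hv)
    have h1 := K.facet.1 v hv
    have h2 := K.ge v hv hz
    rw [hm] at h1 h2
    have h3 : m = 1 ∨ m = 0 ∨ m = -1 := by
      norm_cast at *
      omega
    rcases h3 with rfl | rfl | rfl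
    · exact .inr (.inl (K.of_one v hv (by simpa using hm)))
    · exact .inr (.inr (.inl (K.of_zero v hv (by simpa using hm))))
    · exact .inr (.inr (.inr (K.of_neg_one hv (by simpa using hm))))

/-- If `φ` swaps `a` and `c`, the functional taking the value `s` at `e a`, `t` at `e c` and `1`
at the other `e j` is a facet functional, under numerical conditions on `s` and `t`. Its facet
contains `e c - e a` and one of `-e a`, `-e c` in place of `e a` and `e c`. -/
lemma facetFun_constr (K : Config V f e φ a b) {c : Fin d} (hac : φ a = c) (hcb : c ≠ b)
    (hca : φ c = a) {s t : ℝ} (hs : s ≤ 0) (hst : t - s = 1) (hz : -s - 1 ≤ 1)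
    (hneg : -e a ∈ V → -s ≤ 1) (hc : c ≠ a) (hw : ∃ w ∈ V,
      e.constr ℝ (fun j => if j = a then s else if j = c then t else 1) w = 1 ∧
      w ∈ ({-e a, -e c} : Set (Fin d → ℝ))) :
    FacetFun V (e.constr ℝ (fun j => if j = a then s else if j = c then t else 1)) := by
  set k : Fin d → ℝ := fun j => if j = a then s else if j = c then t else 1 with hk
  have hka : k a = s := by simp [hk]
  have hkc : k c = t := by simp [hk, hc]
  have hk1 : ∀ j, j ≠ a → j ≠ c → k j = 1 := fun j h1 h2 => by simp [hk, h1, h2]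
  have hkle : ∀ j, k j ≤ 1 := fun j => by
    simp only [hk]
    split_ifs <;> linarith
  have hU : ∀ j, e.constr ℝ k (e j) = k j := fun j => e.constr_basis ℝ k j
  have hb : k b = 1 := hk1 b K.ab.symm hcb.symm
  refine ⟨fun v hv => ?_, ?_⟩
  · rcases K.classify hv with rfl | ⟨j, rfl⟩ | ⟨j, rfl⟩ | ⟨j, rfl⟩
    · rw [map_sub, map_neg, hU, hU, hka, hb]; exact hz
    · rw [hU]; exact hkle j
    · rw [map_sub, hU, hU]
      by_cases hja : j = a
      · subst hja; rw [hac, hka, hkc]; linarith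
      · by_cases hjc : j = c
        · subst hjc; rw [hca, hka, hkc]; linarith
        · rw [hk1 j hja hjc]; linarith [hkle (φ j)]
    · rw [map_neg, hU]
      by_cases hja : j = a
      · subst hja; rw [hka]; exact hneg hv
      · by_cases hjc : j = c
        · subst hjc; rw [hkc]; linarith
        · rw [hk1 j hja hjc]; norm_num
  · obtain ⟨w, hwV, hw1, hw⟩ := hw
    set W := Submodule.span ℝ {v | v ∈ V ∧ e.constr ℝ k v = 1} with hW
    have hy : e c - e a ∈ W := Submodule.subset_span
      ⟨hac ▸ K.phi_mem a, by rw [map_sub, hU, hU, hka, hkc, hst]⟩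
    have hwW : w ∈ W := Submodule.subset_span ⟨hwV, hw1⟩
    have hac' : e a ∈ W ∧ e c ∈ W := by
      rcases hw with rfl | rfl
      · have h1 : e a ∈ W := by simpa using hwW
        exact ⟨h1, by simpa using W.add_mem hy h1⟩
      · have h1 : e c ∈ W := by simpa using hwW
        exact ⟨by simpa using W.sub_mem h1 hy, h1⟩
    rw [eq_top_iff, ← e.span_eq, Submodule.span_le]
    rintro _ ⟨j, rfl⟩
    by_cases hja : j = a
    · exact hja ▸ hac'.1
    · by_cases hjc : j = c
      · exact hjc ▸ hac'.2
      · exact Submodule.subset_span ⟨K.mem j, by rw [hU, hk1 j hja hjc]⟩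

/-- Here `φ` swaps `a` with `φ a`, and `b` with `φ b`; depending on whether `-e a` is a vertex, one
of two facets violates simpliciality. -/
theorem contradiction (K : Config V f e φ a b) : False := by
  have hca : φ a ≠ a := K.ne a
  have hcb : φ a ≠ b := K.phi_ne
  have hc : φ (φ a) = a := K.phi_phi hca hcb rfl
  have hc'a : φ b ≠ a := K.swap.phi_ne
  have hc'b : φ b ≠ b := K.ne b
  have hc' : φ (φ b) = b := K.phi_phi hc'a hc'b rfl
  have hcc : φ b ≠ φ a := fun h => K.ab (by rw [← hc, ← h, hc'])
  by_cases hA : -e a ∈ V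
  · -- a facet containing `-e a`, `e (φ b)` and `e b`, over which both `-e a - e b` and
    -- `e (φ b) - e b` have height `0` and negative coordinate at `e b`
    have hU := K.facetFun_constr (s := -1) (t := 0) rfl hcb hc (by norm_num) (by norm_num)
      (by norm_num) (fun _ => by norm_num) hca
      ⟨-e a, hA, by rw [map_neg, e.constr_basis]; simp, by simp⟩
    have h1 := K.tsr.pair_unique hU (p := e b) (q := -e a) (r := e (φ b))
      ⟨K.mem b, by rw [e.constr_basis]; simp [K.ab.symm, hcb.symm]⟩
      ⟨hA, by rw [map_neg, e.constr_basis]; simp⟩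
      ⟨K.mem _, by rw [e.constr_basis]; simp [hc'a, hcc]⟩ K.bot (K.phi_mem b)
    have h2 := congrArg (e.coord a) h1
    simp [hc'a] at h2
  · -- a facet with the four vertices `e (φ a) - e a`, `-e (φ a)`, `e b`, `-e a - e b`
    have hC : -e (φ a) ∈ V := by
      have := K.mem_of_phi hca hcb (k := a) rfl
      rw [hc] at this
      simpa using this
    have hU := K.facetFun_constr (s := -2) (t := -1) rfl hcb hc (by norm_num) (by norm_num)
      (by norm_num) (fun h => absurd h hA) hca
      ⟨-e (φ a), hC, by rw [map_neg, e.constr_basis]; simp [hca], by simp⟩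
    have h1 := K.tsr.no_relation hU (p := e b) (q := -e a - e b) (r := e (φ a) - e a)
      (s := -e (φ a))
      ⟨K.mem b, by rw [e.constr_basis]; simp [K.ab.symm, hcb.symm]⟩
      ⟨K.bot, by
        rw [map_sub, map_neg, e.constr_basis, e.constr_basis]
        simp [K.ab.symm, hcb.symm]; norm_num⟩
      ⟨K.phi_mem a, by rw [map_sub, e.constr_basis, e.constr_basis]; simp [hca]; norm_num⟩
      ⟨hC, by rw [map_neg, e.constr_basis]; simp [hca]⟩ (by abel)
    rcases h1 with h1 | h1
    · have h2 := congrArg (e.coord b) h1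
      simp [hcb, K.ab] at h2
    · have h2 := congrArg (e.coord b) h1
      simp [hcb] at h2

end Config

/-- If there are `3 d - 1` vertices and they sum to `0`, no vertex has height `-2` over a facet. -/
lemma not_case_two (C : TSR V) (hf : FacetFun V f)
    (hs : ∀ g : (Fin d → ℝ) →ₗ[ℝ] ℝ, ∑ v ∈ V, g v = 0) (hcard : (V.card : ℝ) = 3 * d - 1)
    {z : Fin d → ℝ} (hz : z ∈ V) (hfz : f z = -2) : False := by
  obtain ⟨e, he1, he2⟩ := C.exists_basis hf
  have hlev := fun g hg => C.levels (g := g) hg (hs g) hcard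
  obtain ⟨hd, hge⟩ := (hlev f hf).2 z hz hfz
  obtain ⟨φ, hne, hφV, hφ0, hg⟩ := C.zero_structure hf e he1 he2 hd
  obtain ⟨a, b, hab, rfl⟩ := C.bottom_vertex hf e he1 hg (fun i => (hlev _ (hg i)).1) hz hfz
  have hi : ∀ i, i ≠ a → i ≠ b → (f - e.coord i) (-e a - e b) = -2 := fun i ha hb => by
    rw [LinearMap.sub_apply, hfz]
    simp [ha.symm, hb.symm]
  exact Config.contradiction (a := a) (b := b) (φ := φ)
    { tsr := C, facet := hf, mem := fun i => (he1 i).1, one := fun i => (he1 i).2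
      of_one := he2, ne := hne, phi_mem := hφV, of_zero := hφ0, nbr := hg, ab := hab, bot := hz
      ge := hge
      nbr_card := fun i ha hb => ((hlev _ (hg i)).2 _ hz (hi i ha hb)).1
      nbr_ge_one := fun i ha hb => ((hlev _ (hg i)).2 _ hz (hi i ha hb)).2 }

end TSR

/-- Case 2 is impossible: no terminal simplicial reflexive `d`-polytope with `3d - 1`
vertices has a special facet `F` with exactly `d` vertices on `H(F,0)`, exactly
`d - 2` on `H(F,-1)` and exactly one on `H(F,-2)`. -/
theorem case_two_impossible {d : ℕ} (P : Polytope d)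
    (hrefl : P.IsReflexive) (hsimp : P.IsSimplicial) (hterm : P.IsTerminal)
    (hcard : (P.verts.card : ℤ) = 3 * d - 1)
    (F : Set (Fin d → ℝ)) (hF : P.IsSpecialFacet F)
    (uF : Fin d → ℝ) (huF : P.IsUF F uF) :
    ¬ (({x | x ∈ P.verts ∧ pairing uF x = 0}.ncard : ℤ) = (d : ℤ) ∧
       ({x | x ∈ P.verts ∧ pairing uF x = -1}.ncard : ℤ) = (d : ℤ) - 2 ∧
       ({x | x ∈ P.verts ∧ pairing uF x = -2}.ncard : ℤ) = 1) := by
  rintro ⟨h0, h1, h2⟩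
  have hd : 0 < d := by
    rcases Nat.eq_zero_or_pos d with rfl | h
    · norm_num at hcard
      omega
    · exact h
  have C := Polytope.tsr hd hrefl hsimp hterm
  obtain ⟨hf, hiff⟩ := Polytope.facetFun_of_isFacet hd hrefl.2.1 hF.1 huF
  obtain ⟨e, he1, he2⟩ := C.exists_basis hf
  -- the heights of all vertices sum to `d - (d - 2) - 2 = 0`
  have hsum : ∑ v ∈ P.verts, pairingHom uF v = 0 := by
    classical
    have hcnt : ∀ c : ℝ, ((P.verts.filter fun v => pairingHom uF v = c).card : ℤ) =
        ({x | x ∈ P.verts ∧ pairing uF x = c}.ncard : ℤ) := fun c => by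
      rw [← Set.ncard_coe_finset]
      congr 2
      ext x
      exact Finset.mem_coe.trans Finset.mem_filter
    have hc1 : ((P.verts.filter fun v => pairingHom uF v = 1).card : ℤ) = d := by
      rw [hcnt]
      exact_mod_cast C.card _ hf
    have hc0 := (hcnt 0).trans h0
    have hcm := (hcnt (-1)).trans h1
    have hcmm := (hcnt (-2)).trans h2
    set A : ℝ → Finset (Fin d → ℝ) := fun c => P.verts.filter fun v => pairingHom uF v = c with hA
    have hdisj : ∀ c c' : ℝ, c ≠ c' → Disjoint (A c) (A c') := fun c c' hcc =>
      Finset.disjoint_filter.2 fun v _ h h' => hcc (h.symm.trans h')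
    have hd1 : Disjoint (A 1) (A 0) := hdisj _ _ (by norm_num)
    have hd2 : Disjoint (A 1 ∪ A 0) (A (-1)) :=
      Finset.disjoint_union_left.2 ⟨hdisj _ _ (by norm_num), hdisj _ _ (by norm_num)⟩
    have hd3 : Disjoint (A 1 ∪ A 0 ∪ A (-1)) (A (-2)) :=
      Finset.disjoint_union_left.2 ⟨Finset.disjoint_union_left.2
        ⟨hdisj _ _ (by norm_num), hdisj _ _ (by norm_num)⟩, hdisj _ _ (by norm_num)⟩
    have hall : A 1 ∪ A 0 ∪ A (-1) ∪ A (-2) = P.verts := by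
      refine Finset.eq_of_subset_of_card_le ?_ ?_
      · simp [hA, Finset.union_subset_iff, Finset.filter_subset]
      · rw [Finset.card_union_of_disjoint hd3, Finset.card_union_of_disjoint hd2,
          Finset.card_union_of_disjoint hd1]
        simp only [hA]
        omega
    have hval : ∀ c, ∑ v ∈ A c, pairingHom uF v = ((A c).card : ℤ) * c := fun c => by
      rw [Finset.sum_congr rfl fun v hv => (Finset.mem_filter.1 hv).2, Finset.sum_const,
        nsmul_eq_mul, Int.cast_natCast]
    rw [← hall, Finset.sum_union hd3, Finset.sum_union hd2, Finset.sum_union hd1, hval, hval, hval,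
      hval, hc1, hc0, hcm, hcmm]
    push_cast
    ring
  -- so do their coordinates with respect to `F`, which have nonnegative sums as `F` is special
  have hcoord : ∀ i, 0 ≤ e.coord i (∑ v ∈ P.verts, v) := fun i => by
    obtain ⟨u, hu⟩ := exists_pairing (e.coord i)
    rw [hu]
    refine hF.2 (e i) ⟨(he1 i).1, (hiff _ (he1 i).1).2 (he1 i).2⟩ u ⟨?_, fun w hw hwi => ?_⟩
    · rw [← pairingHom_apply, ← hu, coord_basis, if_pos rfl]
    · obtain ⟨j, rfl⟩ := he2 w hw.1 ((hiff _ hw.1).1 hw.2)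
      rw [← pairingHom_apply, ← hu, coord_basis, if_neg fun h => hwi (by rw [h])]
  have hzero : ∑ v ∈ P.verts, v = 0 := by
    rw [← map_sum, sum_coord_of_one e fun i => (he1 i).2,
      Finset.sum_eq_zero_iff_of_nonneg fun i _ => hcoord i] at hsum
    exact e.ext_elem fun i => by simpa using hsum i (mem_univ i)
  obtain ⟨z, hz⟩ := Set.ncard_eq_one.1
    (show {x | x ∈ P.verts ∧ pairing uF x = -2}.ncard = 1 by omega)
  have hzm : z ∈ {x | x ∈ P.verts ∧ pairing uF x = -2} := by rw [hz]; rfl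
  refine C.not_case_two hf (fun g => by rw [← map_sum, hzero, map_zero]) ?_ hzm.1 hzm.2
  exact_mod_cast congrArg (Int.cast (R := ℝ)) hcard
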